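/- With pinning ε=(π_i ε)_{i∈V}, lim_{ε↓0} E_{μ^ε}[O^π_xy · 1{|R(T)|>1}] = 0. -/

import Mathlib

/-!
The expectation is a finite sum over spanning trees `T`; a tree with `k = |R(T)| ≥ 2` roots is shown
to contribute `O(√ε)`. Write `n = |V|`, `u = t_x` and `M = ∑_v |t_v - t_x|`.

The Gibbs factors of the edges of `Γ` give Gaussian decay in `t_v - u`, because
`cosh z - 1 ≥ z²/2` and `Γ` is connected (`poincare`, `gibbs_prod_le`). Hence every factor `e^{CM}` is
harmless, and only powers of `e^u` and `ε` have to be counted: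
* `∏ e^{-t_j}` gives `e^{-nu}`;
* the tree weight gives `ε^k e^{(2n-k)u}`, since `T` has `n` edges, `k` of them at `ρ`
  (`treeW_prod_le`);
* the observable is at most `e^{t_y}/π_x`, giving `e^u`;
* the Gaussian integral over `s` uses a stiffness of order `e^{2u}` for the `n - 1` differences
  `s_v - s_x` and the pinning `ε π_x e^u` for `s_x`, giving `ε^{-1/2} e^{-(n-1)u - u/2}`
  (`gauss_lintegral`).

The product is `ε^{k-1/2} e^{(3/2-k)u}`, to be integrated against the pinning factor
`e^{-ε π_x (cosh u - 1)}`. It restricts `u` to `|u| ≲ log(1/ε)`, and since `k ≥ 2` the integrand is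
at most a constant times `√ε e^{-|u|/2}` (`scalar_bound`).
-/

open MeasureTheory Real Filter
open scoped BigOperators

attribute [local instance] Classical.propDecidable

namespace H22

variable {V : Type*} [Fintype V] [DecidableEq V]

/-- The augmented graph `Γ_ρ`: add an extra vertex `ρ` (encoded by `none`)
joined to every vertex of the original graph. -/
def aug (G : SimpleGraph V) : SimpleGraph (Option V) :=
  SimpleGraph.fromRel (fun a b =>
    match a, b with
    | some i, some j => G.Adj i j
    | _, _ => True)

/-- `T` is (the edge set of) a spanning tree of `G`. -/
def IsSpanningTree {α : Type*} (G : SimpleGraph α) (T : Finset (Sym2 α)) : Prop :=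
  ↑T ⊆ G.edgeSet ∧ (SimpleGraph.fromEdgeSet (↑T : Set (Sym2 α))).IsTree

/-- The finset of all spanning trees of `G`. -/
noncomputable def STrees {α : Type*} [Fintype α] [DecidableEq α] (G : SimpleGraph α) :
    Finset (Finset (Sym2 α)) :=
  Finset.univ.filter (fun T => IsSpanningTree G T)

/-- Extension of a vector `t : V → ℝ` to `Option V` by `t_ρ := 0`. -/
def extV (t : V → ℝ) : Option V → ℝ := fun a => Option.elim a 0 t

/-- Lift of a (symmetrized) function of two vertices to unordered pairs. -/
noncomputable def esym {α : Type*} (f : α → α → ℝ) : Sym2 α → ℝ :=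
  Sym2.lift ⟨fun a b => (f a b + f b a) / 2, fun a b => by ring⟩

/-- Combined edge weights on the augmented graph: `β` on edges of `Γ`,
`ε_i` on the edge `i ∼ ρ`. -/
def bres (β : V → V → ℝ) (ε : V → ℝ) : Option V → Option V → ℝ := fun a b =>
  match a, b with
  | some i, some j => β i j
  | some i, none => ε i
  | none, some j => ε j
  | none, none => 0

/-- `B_{ij}(t,s) = cosh(t_i - t_j) + ½ (s_i - s_j)² e^{t_i+t_j}` on the augmented graph. -/
noncomputable def Bfun (t s : V → ℝ) (a b : Option V) : ℝ :=
  Real.cosh (extV t a - extV t b) +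
    (1 / 2) * (extV s a - extV s b) ^ 2 * Real.exp (extV t a + extV t b)

/-- Weight `β_{ij} e^{t_i+t_j}` of an edge of the augmented graph. -/
noncomputable def treeW (β : V → V → ℝ) (ε : V → ℝ) (t : V → ℝ) : Sym2 (Option V) → ℝ :=
  esym (fun a b => bres β ε a b * Real.exp (extV t a + extV t b))

/-- Gibbs factor `e^{-β_{ij}(B_{ij}(t,s)-1)}` of an edge of the augmented graph. -/
noncomputable def gibbs (β : V → V → ℝ) (ε : V → ℝ) (t s : V → ℝ) : Sym2 (Option V) → ℝ :=
  esym (fun a b => Real.exp (-(bres β ε a b * (Bfun t s a b - 1))))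

/-- The density of the measure `μ^ε` with respect to
(Lebesgue on `ℝ^V × ℝ^V`) × (counting measure on spanning trees). -/
noncomputable def dens (G : SimpleGraph V) (β : V → V → ℝ) (ε : V → ℝ)
    (t s : V → ℝ) (T : Finset (Sym2 (Option V))) : ℝ :=
  (∏ j, Real.exp (-t j) / (2 * Real.pi)) *
  (∏ e ∈ Finset.univ.filter (fun e : Sym2 (Option V) => e ∈ (aug G).edgeSet),
      gibbs β ε t s e) *
  (∏ e ∈ T, treeW β ε t e)

/-- Expectation of an observable `f(t,s,T)` under the measure `μ^ε`. -/
noncomputable def expect (G : SimpleGraph V) (β : V → V → ℝ) (ε : V → ℝ)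
    (f : (V → ℝ) → (V → ℝ) → Finset (Sym2 (Option V)) → ℝ) : ℝ :=
  ∑ T ∈ STrees (aug G), ∫ p : (V → ℝ) × (V → ℝ), dens G β ε p.1 p.2 T * f p.1 p.2 T

/-- The weighted graph Laplacian `A(t)` of `Γ`. -/
noncomputable def Amat (G : SimpleGraph V) (β : V → V → ℝ) (t : V → ℝ) : Matrix V V ℝ :=
  Matrix.of fun i j =>
    if i = j then ∑ k ∈ Finset.univ.filter (fun k => G.Adj k j), β k j * Real.exp (t k + t j)
    else if G.Adj i j then -(β i j * Real.exp (t i + t j)) else 0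

/-- The pinning diagonal matrix `ε̂(t) = diag(ε_i e^{t_i})`. -/
noncomputable def epsHat (ε : V → ℝ) (t : V → ℝ) : Matrix V V ℝ :=
  Matrix.diagonal fun i => ε i * Real.exp (t i)

/-- The Green's function `G^ε_{xy} = e^{t_x+t_y} (A(t)+ε̂(t))⁻¹_{xy}`. -/
noncomputable def Gfun (G : SimpleGraph V) (β : V → V → ℝ) (ε : V → ℝ)
    (t : V → ℝ) (x y : V) : ℝ :=
  Real.exp (t x + t y) * (Amat G β t + epsHat ε t)⁻¹ x y

/-- The edge `i ∼ ρ` of the augmented graph. -/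
def rootEdge (i : V) : Sym2 (Option V) := s(some i, none)

/-- The set of roots `R(T) = {i ∈ V : (i ∼ ρ) ∈ T}`. -/
noncomputable def roots (T : Finset (Sym2 (Option V))) : Finset V :=
  Finset.univ.filter fun i => rootEdge i ∈ T

/-- The forest `F(T) = T ∩ E`: edges of `T` not incident to `ρ`. -/
noncomputable def forestOf (T : Finset (Sym2 (Option V))) : Finset (Sym2 (Option V)) :=
  T.filter fun e => ¬ ((none : Option V) ∈ e)

/-- `x ↔_T y`: `x` and `y` are connected in `T` through a path not using `ρ`. -/
def connIn (T : Finset (Sym2 (Option V))) (x y : V) : Prop :=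
  (SimpleGraph.fromEdgeSet (↑(forestOf T) : Set (Sym2 (Option V)))).Reachable (some x) (some y)

/-- The observable `O^π_{xy}`. -/
noncomputable def obs (pv : V → ℝ) (x y : V) (t : V → ℝ)
    (T : Finset (Sym2 (Option V))) : ℝ :=
  Real.exp (t x + t y) / (pv x * Real.exp (t x) + pv y * Real.exp (t y)) *
    (if rootEdge x ∈ T ∧ connIn T x y then 1 else 0)

/-- The pinning `ε = (π_i ε)_{i ∈ V}`. -/
def pinOf (pv : V → ℝ) (ε : ℝ) : V → ℝ := fun i => pv i * ε

/-- The pinning `c δ_x` concentrated at the single vertex `x`. -/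
def singlePin (x : V) (c : ℝ) : V → ℝ := fun i => if i = x then c else 0

end H22

open scoped Topology

namespace H22

/-! ### Integrals over `ℝ^V` -/

/-- The invertible linear change of variables `f ↦ (f_x, (f_v - f_x)_{v ≠ x})` turns an integral over
`ℝ^V` of a product of functions of these coordinates into a product of one-dimensional integrals,
up to a constant (the inverse determinant, whose value is irrelevant). -/
lemma shear_lintegral {V : Type*} [Fintype V] [DecidableEq V] (x : V) :
    ∃ C : ℝ, 0 ≤ C ∧ ∀ g : V → ℝ → ℝ, (∀ v, Integrable (g v)) → (∀ v z, 0 ≤ g v z) →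
      ∫⁻ f : V → ℝ, ENNReal.ofReal (∏ v, g v (if v = x then f x else f v - f x))
        = ENNReal.ofReal (C * ∏ v, ∫ z, g v z) := by
  let L : (V → ℝ) →ₗ[ℝ] (V → ℝ) :=
    { toFun := fun f v => if v = x then f x else f v - f x
      map_add' := fun f g => by
        funext v; by_cases h : v = x <;> simp [h]; ring
      map_smul' := fun c f => by
        funext v; by_cases h : v = x <;> simp [h]; ring }
  have hL : ∀ f v, L f v = if v = x then f x else f v - f x := fun f v => rfl
  have hinj : Function.Injective L := by
    intro f g h
    have hx : f x = g x := by simpa [hL] using congrFun h x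
    funext v
    by_cases hv : v = x
    · rw [hv, hx]
    · simpa [hL, hv, hx] using congrFun h v
  have hdet : LinearMap.det L ≠ 0 := by
    have : IsUnit (LinearMap.det L) :=
      LinearMap.isUnit_det L ((Module.End.isUnit_iff L).2
        ⟨hinj, LinearMap.injective_iff_surjective.1 hinj⟩)
    exact this.ne_zero
  refine ⟨|(LinearMap.det L)⁻¹|, abs_nonneg _, fun g hg h0 => ?_⟩
  have hint : Integrable (fun f : V → ℝ => ∏ v, g v (f v)) :=
    Integrable.fintype_prod hg
  have hmap := Real.map_linearMap_volume_pi_eq_smul_volume_pi hdet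
  have hLm : Measurable L := (LinearMap.continuous_of_finiteDimensional L).measurable
  have hae : AEMeasurable (fun f : V → ℝ => ENNReal.ofReal (∏ v, g v (f v)))
      (Measure.map L volume) := by
    rw [hmap]
    exact (hint.aestronglyMeasurable.aemeasurable.ennreal_ofReal).smul_measure _
  have h1 := lintegral_map' hae hLm.aemeasurable
  rw [hmap, lintegral_smul_measure, ← ofReal_integral_eq_lintegral_ofReal hint
    (Eventually.of_forall fun f => Finset.prod_nonneg fun v _ => h0 v _),
    integral_fintype_prod_volume_eq_prod] at h1
  rw [ENNReal.ofReal_mul (abs_nonneg _)]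
  simpa [hL] using h1.symm

lemma integrable_exp_neg_half_abs : Integrable (fun z : ℝ => Real.exp (-|z| / 2)) := by
  refine (integrable_inv_one_add_sq.const_mul 8).mono' (by fun_prop)
    (Eventually.of_forall fun z => ?_)
  rw [Real.norm_of_nonneg (Real.exp_pos _).le, neg_div, Real.exp_neg, ← div_eq_mul_inv,
    inv_eq_one_div, div_le_div_iff₀ (Real.exp_pos _) (by positivity)]
  have h := Real.quadratic_le_exp_of_nonneg (x := |z| / 2) (by positivity)
  have := sq_abs z
  nlinarith [abs_nonneg z]

lemma integrable_exp_abs_sub_sq (C : ℝ) {c : ℝ} (hc : 0 < c) :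
    Integrable (fun z : ℝ => Real.exp (C * |z| - c * z ^ 2)) := by
  refine ((integrable_exp_neg_mul_sq (half_pos hc)).const_mul
    (Real.exp (C ^ 2 / (2 * c)))).mono' (by fun_prop) (Eventually.of_forall fun z => ?_)
  rw [Real.norm_of_nonneg (Real.exp_pos _).le, ← Real.exp_add, Real.exp_le_exp]
  have h : 0 ≤ (C - c * |z|) ^ 2 / (2 * c) := by positivity
  have h2 : (C - c * |z|) ^ 2 / (2 * c) = C ^ 2 / (2 * c) - C * |z| + c / 2 * z ^ 2 := by
    rw [← sq_abs z]; field_simp; ring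
  linarith

/-- The Gaussian integral over `s`: the powers of `A` and `B` are what matters, `C` does not
depend on them. -/
lemma gauss_lintegral {V : Type*} [Fintype V] [DecidableEq V] (x : V) :
    ∃ C : ℝ, 0 ≤ C ∧ ∀ A B : ℝ, 0 < A → 0 < B →
      ∫⁻ s : V → ℝ, ENNReal.ofReal
        (Real.exp (-(A * ∑ v, (s v - s x) ^ 2 + B * (s x) ^ 2)))
        = ENNReal.ofReal (C * ((√A)⁻¹ ^ (Fintype.card V - 1) * (√B)⁻¹)) := by
  obtain ⟨C, hC, h⟩ := shear_lintegral x
  refine ⟨C * (√Real.pi ^ (Fintype.card V - 1) * √Real.pi), by positivity,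
    fun A B hA hB => ?_⟩
  have := h (fun v z => Real.exp (-(if v = x then B else A) * z ^ 2))
    (fun v => integrable_exp_neg_mul_sq (by split_ifs <;> assumption))
    (fun v z => (Real.exp_pos _).le)
  convert this using 1
  · refine lintegral_congr fun s => ?_
    rw [← Real.exp_sum]
    congr 2
    rw [← Finset.add_sum_erase _ _ (Finset.mem_univ x),
      ← Finset.add_sum_erase _ (fun v => -(if v = x then B else A) * _) (Finset.mem_univ x)]
    have e : ∀ v ∈ Finset.univ.erase x,
        -(if v = x then B else A) * (if v = x then s x else s v - s x) ^ 2
          = -A * (s v - s x) ^ 2 := by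
      intro v hv
      simp [Finset.ne_of_mem_erase hv]
    rw [Finset.sum_congr rfl e, ← Finset.mul_sum]
    simp
  · congr 1
    simp_rw [integral_gaussian]
    rw [← Finset.mul_prod_erase _ _ (Finset.mem_univ x)]
    have e : ∀ v ∈ Finset.univ.erase x,
        √(Real.pi / (if v = x then B else A)) = √Real.pi * (√A)⁻¹ := by
      intro v hv
      rw [if_neg (Finset.ne_of_mem_erase hv), Real.sqrt_div Real.pi_pos.le, div_eq_mul_inv]
    rw [Finset.prod_congr rfl e, Finset.prod_const, Finset.card_erase_of_mem (Finset.mem_univ x),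
      Finset.card_univ, mul_pow]
    rw [if_pos rfl, Real.sqrt_div Real.pi_pos.le]
    ring

lemma t_lintegral {V : Type*} [Fintype V] [DecidableEq V] (x : V) (C : ℝ) {c : ℝ} (hc : 0 < c) :
    ∫⁻ t : V → ℝ, ENNReal.ofReal
        (Real.exp (-|t x| / 2 + C * ∑ v, |t v - t x| - c * ∑ v, (t v - t x) ^ 2)) ≠ ⊤ := by
  obtain ⟨C', hC', h⟩ := shear_lintegral x
  have := h (fun v z => if v = x then Real.exp (-|z| / 2) else Real.exp (C * |z| - c * z ^ 2))
    (fun v => by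
      by_cases hv : v = x
      · simpa [hv] using integrable_exp_neg_half_abs
      · simpa [hv] using integrable_exp_abs_sub_sq C hc)
    (fun v z => by split_ifs <;> positivity)
  convert (this.trans_ne ENNReal.ofReal_ne_top) using 1
  · refine lintegral_congr fun t => ?_
    congr 1
    rw [← Finset.mul_prod_erase _ _ (Finset.mem_univ x),
      ← Finset.add_sum_erase _ _ (Finset.mem_univ x),
      ← Finset.add_sum_erase _ (fun v => (t v - t x) ^ 2) (Finset.mem_univ x)]
    have e : ∀ v ∈ Finset.univ.erase x,
        (if v = x then Real.exp (-|if v = x then t x else t v - t x| / 2) else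
          Real.exp (C * |if v = x then t x else t v - t x| -
            c * (if v = x then t x else t v - t x) ^ 2))
          = Real.exp (C * |t v - t x| - c * (t v - t x) ^ 2) := by
      intro v hv
      simp [Finset.ne_of_mem_erase hv]
    rw [Finset.prod_congr rfl e, ← Real.exp_sum, Finset.sum_sub_distrib, ← Finset.mul_sum,
      ← Finset.mul_sum]
    simp only [if_true]
    rw [← Real.exp_add]
    simp
    ring

/-- The bound for the zero mode `u = t_x`, with `e` the pinning strength. For `u ≥ 0` the factor
`exp ((3/2 - k) u)` alone decays, since `k ≥ 2`. For `u ≤ 0` its growth is cut off by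
`exp (-p e cosh u)` where `exp |u|` is of order `1 / e`, via `z ^ m * exp (-z) ≤ m!` for
`z = p * e * exp (-u) / 2`; the prefactor `e ^ k / √e` then still leaves a factor `√e`. -/
lemma scalar_bound {p : ℝ} (hp : 0 < p) {k : ℕ} (hk : 2 ≤ k) :
    ∃ C : ℝ, 0 ≤ C ∧ ∀ e u : ℝ, 0 < e → e ≤ 1 →
      e ^ k * (√e)⁻¹ * Real.exp ((3 / 2 - k) * u - p * e * (Real.cosh u - 1))
        ≤ C * (√e * Real.exp (-|u| / 2)) := by
  obtain ⟨m, rfl⟩ : ∃ m, k = m + 2 := ⟨k - 2, by omega⟩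
  set D : ℝ := Real.exp p * ((2 / p) ^ (m + 1) * (m + 1).factorial) with hD
  have hD0 : 0 ≤ D := by positivity
  refine ⟨1 + D, by positivity, fun e u he he1 => ?_⟩
  have hs : 0 < √e := Real.sqrt_pos.2 he
  have hss : √e * √e = e := Real.mul_self_sqrt he.le
  have hek : e ^ (m + 2) * (√e)⁻¹ = √e * e ^ (m + 1) := by
    field_simp; rw [sq, hss]; ring
  rw [hek, mul_assoc, mul_left_comm (1 + D)]
  refine mul_le_mul_of_nonneg_left ?_ hs.le
  push_cast
  have hch := Real.one_le_cosh u
  rcases le_total 0 u with hu | hu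
  · rw [abs_of_nonneg hu]
    have h1 : e ^ (m + 1) ≤ 1 := pow_le_one₀ he.le he1
    have h2 : Real.exp ((3 / 2 - ((m : ℝ) + 2)) * u - p * e * (Real.cosh u - 1))
        ≤ Real.exp (-u / 2) := by
      rw [Real.exp_le_exp]
      have : 0 ≤ p * e * (Real.cosh u - 1) := mul_nonneg (by positivity) (by linarith)
      have : 0 ≤ (m : ℝ) * u := by positivity
      nlinarith
    calc _ ≤ 1 * Real.exp (-u / 2) := mul_le_mul h1 h2 (Real.exp_pos _).le zero_le_one
      _ ≤ _ := mul_le_mul_of_nonneg_right (by linarith) (Real.exp_pos _).le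
  · rw [abs_of_nonpos hu]
    set z : ℝ := p * e * Real.exp (-u) / 2 with hz
    have hz0 : 0 ≤ z := by positivity
    have h1 := Real.pow_div_factorial_le_exp z hz0 (m + 1)
    have h2 : Real.exp ((3 / 2 - ((m : ℝ) + 2)) * u - p * e * (Real.cosh u - 1))
        ≤ Real.exp (-u) ^ (m + 1) * (Real.exp p * Real.exp (-z)) * Real.exp (- -u / 2) := by
      rw [← Real.exp_nat_mul, ← Real.exp_add, ← Real.exp_add, ← Real.exp_add, Real.exp_le_exp]
      have hc : Real.exp (-u) / 2 ≤ Real.cosh u := by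
        rw [Real.cosh_eq]; linarith [Real.exp_pos u]
      have h3 : z ≤ p * e * Real.cosh u := by
        have := mul_le_mul_of_nonneg_left hc (by positivity : 0 ≤ p * e)
        rw [hz]; linarith
      have h4 : p * e ≤ p := by nlinarith
      push_cast
      linarith
    have h5 : e ^ (m + 1) * Real.exp (-u) ^ (m + 1) = (2 / p) ^ (m + 1) * z ^ (m + 1) := by
      rw [← mul_pow, ← mul_pow]; congr 1; rw [hz]; field_simp
    have h6 : z ^ (m + 1) * Real.exp (-z) ≤ (m + 1).factorial := by
      rw [Real.exp_neg, ← div_eq_mul_inv, div_le_iff₀ (Real.exp_pos _)]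
      rw [div_le_iff₀ (by positivity)] at h1
      linarith
    calc _ ≤ e ^ (m + 1) * (Real.exp (-u) ^ (m + 1) * (Real.exp p * Real.exp (-z))
          * Real.exp (- -u / 2)) := mul_le_mul_of_nonneg_left h2 (by positivity)
      _ = Real.exp p * ((2 / p) ^ (m + 1) * (z ^ (m + 1) * Real.exp (-z)))
          * Real.exp (- -u / 2) := by
        linear_combination (Real.exp p * Real.exp (-z) * Real.exp (- -u / 2)) * h5
      _ ≤ D * Real.exp (- -u / 2) := by rw [hD]; gcongr
      _ ≤ _ := mul_le_mul_of_nonneg_right (by linarith) (Real.exp_pos _).le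

/-! ### Gibbs factors -/

/-- A Poincaré inequality: on a connected graph, control of every edge gradient of `f` controls the
deviations of `f` from its value at `x`, by telescoping along a walk. -/
lemma poincare {V : Type*} [Fintype V] (G : SimpleGraph V) (hG : G.Connected)
    (β : V → V → ℝ) (hβpos : ∀ i j, G.Adj i j → 0 < β i j) (x : V) :
    ∃ K : ℝ, 0 < K ∧ ∀ (f : V → ℝ) (D : ℝ), 0 ≤ D →
      (∀ i j, G.Adj i j → β i j * (f i - f j) ^ 2 ≤ D) →
      ∑ v, (f v - f x) ^ 2 ≤ K * D := by
  have key : ∀ v, ∃ K : ℝ, ∀ (f : V → ℝ) (D : ℝ),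
      (∀ i j, G.Adj i j → β i j * (f i - f j) ^ 2 ≤ D) → (f v - f x) ^ 2 ≤ K * D := by
    intro v
    obtain ⟨p⟩ := hG.preconnected v x
    induction p with
    | nil => exact ⟨0, fun f D _ => by simp⟩
    | @cons u w _ h p ih =>
      obtain ⟨K, hK⟩ := ih
      refine ⟨2 / β u w + 2 * K, fun f D hD => ?_⟩
      have h1 := hK f D hD
      have h2 : (f u - f w) ^ 2 ≤ D / β u w := by
        rw [le_div_iff₀ (hβpos u w h), mul_comm]; exact hD u w h
      have h3 : 2 / β u w * D = 2 * (D / β u w) := by ring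
      have h4 : ∀ a b c : ℝ, (a - c) ^ 2 ≤ 2 * (a - b) ^ 2 + 2 * (b - c) ^ 2 := fun a b c => by
        nlinarith [sq_nonneg ((a - b) - (b - c))]
      rw [add_mul, h3]
      exact (h4 _ (f w) _).trans (by linarith)
  choose K hK using key
  refine ⟨1 + ∑ v, |K v|, by positivity, fun f D hD0 hD => ?_⟩
  calc ∑ v, (f v - f x) ^ 2 ≤ ∑ v, |K v| * D :=
        Finset.sum_le_sum fun v _ => (hK v f D hD).trans
          (mul_le_mul_of_nonneg_right (le_abs_self _) hD0)
    _ = (∑ v, |K v|) * D := (Finset.sum_mul ..).symm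
    _ ≤ _ := mul_le_mul_of_nonneg_right (by linarith) hD0

lemma aug_adj_some {V : Type*} (G : SimpleGraph V) (i j : V) :
    (aug G).Adj (some i) (some j) ↔ G.Adj i j := by
  simp only [aug, SimpleGraph.fromRel_adj, ne_eq, Option.some.injEq]
  constructor
  · rintro ⟨_, h | h⟩
    · exact h
    · exact h.symm
  · exact fun h => ⟨h.ne, Or.inl h⟩

lemma aug_adj_none {V : Type*} (G : SimpleGraph V) (i : V) :
    (aug G).Adj (some i) none := by
  simp [aug, SimpleGraph.fromRel_adj]

lemma bres_symm {V : Type*} {β : V → V → ℝ} (hβ : ∀ i j, β i j = β j i) (ε : V → ℝ)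
    (a b : Option V) : bres β ε a b = bres β ε b a := by
  cases a <;> cases b <;> first | rfl | exact hβ _ _

lemma Bfun_symm {V : Type*} (t s : V → ℝ) (a b : Option V) : Bfun t s a b = Bfun t s b a := by
  unfold Bfun
  rw [← Real.cosh_neg, neg_sub, add_comm (extV t a), ← neg_sub (extV s a), neg_sq]

lemma gibbs_mk {V : Type*} {β : V → V → ℝ} (hβ : ∀ i j, β i j = β j i) (ε t s : V → ℝ)
    (a b : Option V) :
    gibbs β ε t s s(a, b) = Real.exp (-(bres β ε a b * (Bfun t s a b - 1))) := by
  simp only [gibbs, esym, Sym2.lift_mk]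
  rw [bres_symm hβ ε b a, Bfun_symm t s b a]
  ring

lemma treeW_mk {V : Type*} {β : V → V → ℝ} (hβ : ∀ i j, β i j = β j i) (ε t : V → ℝ)
    (a b : Option V) :
    treeW β ε t s(a, b) = bres β ε a b * Real.exp (extV t a + extV t b) := by
  simp only [treeW, esym, Sym2.lift_mk]
  rw [bres_symm hβ ε b a, add_comm (extV t b)]
  ring

lemma one_le_Bfun {V : Type*} (t s : V → ℝ) (a b : Option V) : 1 ≤ Bfun t s a b := by
  unfold Bfun
  have := Real.one_le_cosh (extV t a - extV t b)
  have : 0 ≤ (1 / 2) * (extV s a - extV s b) ^ 2 * Real.exp (extV t a + extV t b) := by positivity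
  linarith

lemma bres_nonneg {V : Type*} (G : SimpleGraph V) {β : V → V → ℝ}
    (hβpos : ∀ i j, G.Adj i j → 0 < β i j) {ε : V → ℝ} (hε : ∀ i, 0 ≤ ε i)
    {a b : Option V} (h : (aug G).Adj a b) : 0 ≤ bres β ε a b := by
  cases a with
  | none => cases b with
    | none => simp [bres]
    | some j => exact hε j
  | some i => cases b with
    | none => exact hε i
    | some j => exact (hβpos i j ((aug_adj_some G i j).1 h)).le

lemma half_sq_le_cosh_sub_one (z : ℝ) : z ^ 2 / 2 ≤ Real.cosh z - 1 := by
  have h := Real.cosh_two_mul (z / 2)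
  have h2 := Real.cosh_sq (z / 2)
  have h3 : (z / 2) ^ 2 ≤ Real.sinh (z / 2) ^ 2 := by
    rw [sq_le_sq, Real.abs_sinh]
    exact Real.self_le_sinh_iff.2 (abs_nonneg _)
  rw [mul_div_cancel₀ z two_ne_zero] at h
  linarith [h3, h2, h, (by ring : (z / 2) ^ 2 = z ^ 2 / 4)]

/-- All edges of `Γ_ρ` other than those of `Γ` and `x ∼ ρ` have Gibbs factor at most one. By
`poincare`, applied to `t` and to `s`, the edges of `Γ` produce Gaussian decay in `t_v - t_x` and
`s_v - s_x`; in the latter `e^{t_i+t_j}` is bounded below by `e^{2t_x-2M}`, `M = ∑ |t_v - t_x|`. -/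
lemma gibbs_prod_le {V : Type*} [Fintype V] [DecidableEq V]
    (G : SimpleGraph V) (hG : G.Connected)
    (β : V → V → ℝ) (hβ : ∀ i j, β i j = β j i)
    (hβpos : ∀ i j, G.Adj i j → 0 < β i j) (x : V) :
    ∃ c : ℝ, 0 < c ∧ ∀ (ε : V → ℝ), (∀ i, 0 ≤ ε i) → ∀ t s : V → ℝ,
      ∏ e ∈ Finset.univ.filter (fun e : Sym2 (Option V) => e ∈ (aug G).edgeSet),
        gibbs β ε t s e ≤
      Real.exp (-(ε x * (Real.cosh (t x) - 1)) - c * ∑ v, (t v - t x) ^ 2) *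
      Real.exp (-(c * Real.exp (2 * t x - 2 * ∑ v, |t v - t x|) * ∑ v, (s v - s x) ^ 2 +
        ε x * Real.exp (t x) / 2 * (s x) ^ 2)) := by
  obtain ⟨K, hK, hP⟩ := poincare G hG β hβpos x
  refine ⟨1 / (4 * K), by positivity, fun ε hε t s => ?_⟩
  set S := Finset.univ.filter (fun e : Sym2 (Option V) => e ∈ (aug G).edgeSet) with hS
  have hpos : ∀ e, 0 < gibbs β ε t s e := by
    intro e
    induction e with | _ a b => rw [gibbs_mk hβ]; exact Real.exp_pos _
  have hle : ∀ e ∈ S, gibbs β ε t s e ≤ 1 := by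
    intro e he
    induction e with | _ a b =>
    have hab : (aug G).Adj a b := by simpa [hS] using he
    rw [gibbs_mk hβ, Real.exp_le_one_iff, neg_nonpos]
    exact mul_nonneg (bres_nonneg G hβpos hε hab) (by linarith [one_le_Bfun t s a b])
  have hroot : rootEdge x ∈ S := by simp [hS, rootEdge, aug_adj_none]
  set X := ∏ e ∈ S.erase (rootEdge x), gibbs β ε t s e with hX
  have hX0 : 0 < X := Finset.prod_pos fun e _ => hpos e
  have hX1 : X ≤ 1 := Finset.prod_le_one (fun e _ => (hpos e).le)
    fun e he => hle e (Finset.mem_of_mem_erase he)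
  set D := -Real.log X with hD
  have hD0 : 0 ≤ D := neg_nonneg.2 (Real.log_nonpos hX0.le hX1)
  have hXD : X = Real.exp (-D) := by rw [hD, neg_neg, Real.exp_log hX0]
  -- each edge of `G` carries at most the total energy `D`
  have hedge : ∀ i j, G.Adj i j →
      β i j * (Real.cosh (t i - t j) + 1 / 2 * (s i - s j) ^ 2 * Real.exp (t i + t j) - 1)
        ≤ D := by
    intro i j hij
    have hm : s(some i, some j) ∈ S.erase (rootEdge x) := by
      simp [hS, rootEdge, aug_adj_some, hij]
    have h1 : X ≤ gibbs β ε t s s(some i, some j) := by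
      rw [hX, ← Finset.mul_prod_erase _ _ hm]
      exact mul_le_of_le_one_right (hpos _).le (Finset.prod_le_one (fun e _ => (hpos e).le)
        fun e he => hle e (Finset.mem_of_mem_erase (Finset.mem_of_mem_erase he)))
    rw [gibbs_mk hβ, hXD, Real.exp_le_exp, neg_le_neg_iff] at h1
    exact h1
  set M := ∑ v, |t v - t x| with hM
  have hMv : ∀ v, |t v - t x| ≤ M := fun v =>
    Finset.single_le_sum (f := fun v => |t v - t x|) (fun _ _ => abs_nonneg _) (Finset.mem_univ v)
  have ht := hP t (2 * D) (by positivity) (fun i j hij => by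
    have h1 := hedge i j hij
    have h2 := half_sq_le_cosh_sub_one (t i - t j)
    have h3 := hβpos i j hij
    have h4 : (t i - t j) ^ 2 / 2 ≤
        Real.cosh (t i - t j) + 1 / 2 * (s i - s j) ^ 2 * Real.exp (t i + t j) - 1 := by
      have : 0 ≤ 1 / 2 * (s i - s j) ^ 2 * Real.exp (t i + t j) := by positivity
      linarith
    have h5 := mul_le_mul_of_nonneg_left h4 h3.le
    linarith)
  set w := Real.exp (2 * t x - 2 * M) with hw
  have hw0 : 0 < w := Real.exp_pos _
  have hs := hP s (2 * D / w) (by positivity) (fun i j hij => by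
    have h1 := hedge i j hij
    have h2 := Real.one_le_cosh (t i - t j)
    have h3 := hβpos i j hij
    have h6 : w ≤ Real.exp (t i + t j) := by
      rw [hw, Real.exp_le_exp]
      have hi := (abs_le.1 (hMv i)).1
      have hj := (abs_le.1 (hMv j)).1
      linarith
    have h4 : 1 / 2 * (s i - s j) ^ 2 * w ≤
        Real.cosh (t i - t j) + 1 / 2 * (s i - s j) ^ 2 * Real.exp (t i + t j) - 1 := by
      have := mul_le_mul_of_nonneg_left h6 (by positivity : 0 ≤ 1 / 2 * (s i - s j) ^ 2)
      linarith
    have h5 := mul_le_mul_of_nonneg_left h4 h3.le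
    rw [le_div_iff₀ hw0]
    linarith)
  have hsum : 1 / (4 * K) * ∑ v, (t v - t x) ^ 2 + 1 / (4 * K) * w * ∑ v, (s v - s x) ^ 2
      ≤ D := by
    have h1 : 1 / (4 * K) * ∑ v, (t v - t x) ^ 2 ≤ D / 2 := by
      have := mul_le_mul_of_nonneg_left ht (by positivity : 0 ≤ 1 / (4 * K))
      have e : 1 / (4 * K) * (K * (2 * D)) = D / 2 := by field_simp; ring
      linarith
    have h2 : 1 / (4 * K) * w * ∑ v, (s v - s x) ^ 2 ≤ D / 2 := by
      have := mul_le_mul_of_nonneg_left hs (by positivity : 0 ≤ 1 / (4 * K) * w)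
      have e : 1 / (4 * K) * w * (K * (2 * D / w)) = D / 2 := by field_simp; ring
      linarith
    linarith
  rw [← Finset.mul_prod_erase _ _ hroot, ← hX, hXD, rootEdge, gibbs_mk hβ, ← Real.exp_add,
    ← Real.exp_add, Real.exp_le_exp]
  simp only [bres, Bfun, extV, Option.elim, sub_zero, add_zero]
  linarith

/-! ### Tree weights -/

lemma roots_card {V : Type*} [Fintype V] [DecidableEq V] {G : SimpleGraph V}
    {T : Finset (Sym2 (Option V))} (hT : T ∈ STrees (aug G)) :
    (T.filter (fun e => (none : Option V) ∈ e)).card = (roots T).card := by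
  have hT' : ↑T ⊆ (aug G).edgeSet := by
    simp only [STrees, Finset.mem_filter] at hT
    exact hT.2.1
  have hinj : Function.Injective (rootEdge : V → Sym2 (Option V)) := by
    intro i j h
    simpa [rootEdge] using h
  rw [← Finset.card_map ⟨rootEdge, hinj⟩]
  congr 1
  ext e
  simp only [Finset.mem_filter, Finset.mem_map, roots, Finset.mem_univ, true_and,
    Function.Embedding.coeFn_mk]
  constructor
  · rintro ⟨he, hn⟩
    have hadj := hT' (Finset.mem_coe.2 he)
    induction e with | _ a b =>
    rw [SimpleGraph.mem_edgeSet] at hadj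
    cases a with
    | none => cases b with
      | none => exact absurd rfl hadj.ne
      | some j =>
        refine ⟨j, ?_, Sym2.eq_swap⟩
        rw [rootEdge, Sym2.eq_swap]; exact he
    | some i => cases b with
      | none => exact ⟨i, he, rfl⟩
      | some j => simp at hn
  · rintro ⟨i, hi, rfl⟩
    exact ⟨hi, by simp [rootEdge]⟩

lemma tree_card {V : Type*} [Fintype V] [DecidableEq V] {G : SimpleGraph V}
    {T : Finset (Sym2 (Option V))} (hT : T ∈ STrees (aug G)) : T.card = Fintype.card V := by
  simp only [STrees, Finset.mem_filter] at hT
  obtain ⟨_, hsub, htree⟩ := hT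
  have h := htree.card_edgeFinset
  have he : (SimpleGraph.fromEdgeSet (↑T : Set (Sym2 (Option V)))).edgeFinset = T := by
    ext e
    rw [SimpleGraph.mem_edgeFinset, SimpleGraph.edgeSet_fromEdgeSet]
    constructor
    · exact fun h => h.1
    · exact fun h => ⟨h, SimpleGraph.not_isDiag_of_mem_edgeSet _ (hsub h)⟩
  rw [he, Fintype.card_option] at h
  omega

/-- The tree weight up to powers of `e^M`, `M = ∑ |t_v - t_x|`: each of the `k` root edges
contributes at most `e · e^{t_x}`, each of the `n - k` edges of `Γ` at most `e^{2 t_x}`, up to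
constants. -/
lemma treeW_prod_le {V : Type*} [Fintype V] [DecidableEq V]
    (G : SimpleGraph V) (β : V → V → ℝ) (hβ : ∀ i j, β i j = β j i)
    (hβpos : ∀ i j, G.Adj i j → 0 < β i j) (pv : V → ℝ) (hpv : ∀ i, 0 ≤ pv i) (x : V)
    {T : Finset (Sym2 (Option V))} (hT : T ∈ STrees (aug G)) :
    ∃ C : ℝ, 0 ≤ C ∧ ∀ e : ℝ, 0 < e → ∀ t : V → ℝ,
      0 ≤ ∏ a ∈ T, treeW β (pinOf pv e) t a ∧
      ∏ a ∈ T, treeW β (pinOf pv e) t a ≤ C * (e ^ (roots T).card *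
        Real.exp ((2 * (Fintype.card V : ℝ) - (roots T).card) * t x +
          2 * Fintype.card V * ∑ v, |t v - t x|)) := by
  set b : ℝ := (∑ i, ∑ j, |β i j|) + ∑ i, pv i with hb
  have hpv0 : 0 ≤ ∑ i, pv i := Finset.sum_nonneg fun i _ => hpv i
  have hβ0 : 0 ≤ ∑ i, ∑ j, |β i j| :=
    Finset.sum_nonneg fun i _ => Finset.sum_nonneg fun j _ => abs_nonneg _
  have hb0 : 0 ≤ b := by positivity
  have hβb : ∀ i j, β i j ≤ b := fun i j => by
    have h1 : |β i j| ≤ ∑ j, |β i j| :=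
      Finset.single_le_sum (f := fun j => |β i j|) (fun _ _ => abs_nonneg _) (Finset.mem_univ j)
    have h2 : ∑ j, |β i j| ≤ ∑ i, ∑ j, |β i j| :=
      Finset.single_le_sum (f := fun i => ∑ j, |β i j|)
        (fun _ _ => Finset.sum_nonneg fun _ _ => abs_nonneg _) (Finset.mem_univ i)
    linarith [le_abs_self (β i j)]
  have hpb : ∀ i, pv i ≤ b := fun i => by
    have := Finset.single_le_sum (f := pv) (fun i _ => hpv i) (Finset.mem_univ i)
    linarith
  have hT' : ↑T ⊆ (aug G).edgeSet := by
    simp only [STrees, Finset.mem_filter] at hT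
    exact hT.2.1
  refine ⟨b ^ Fintype.card V, by positivity, fun e he t => ?_⟩
  set M := ∑ v, |t v - t x| with hM
  have hMv : ∀ v, |t v - t x| ≤ M := fun v =>
    Finset.single_le_sum (f := fun v => |t v - t x|) (fun _ _ => abs_nonneg _) (Finset.mem_univ v)
  have hε : ∀ i, 0 ≤ pinOf pv e i := fun i => mul_nonneg (hpv i) he.le
  have hnn : ∀ a ∈ T, 0 ≤ treeW β (pinOf pv e) t a := by
    intro a ha
    have hadj := hT' (Finset.mem_coe.2 ha)
    induction a with | _ a c =>
    rw [treeW_mk hβ]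
    exact mul_nonneg (bres_nonneg G hβpos hε hadj) (Real.exp_pos _).le
  refine ⟨Finset.prod_nonneg hnn, ?_⟩
  have hroot : ∀ i, pinOf pv e i * Real.exp (t i) ≤
      (b * Real.exp (2 * M)) * (e * Real.exp (t x)) := by
    intro i
    have h1 : Real.exp (t i) ≤ Real.exp (2 * M) * Real.exp (t x) := by
      rw [← Real.exp_add, Real.exp_le_exp]
      have := abs_le.1 (hMv i)
      have := (abs_nonneg _).trans (hMv i)
      linarith
    have h2 : pinOf pv e i ≤ b * e := mul_le_mul_of_nonneg_right (hpb i) he.le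
    calc _ ≤ b * e * (Real.exp (2 * M) * Real.exp (t x)) :=
          mul_le_mul h2 h1 (Real.exp_pos _).le (by positivity)
      _ = _ := by ring
  have hle : ∀ a ∈ T, treeW β (pinOf pv e) t a ≤ (b * Real.exp (2 * M)) *
      (if (none : Option V) ∈ a then e * Real.exp (t x) else Real.exp (2 * t x)) := by
    intro a ha
    have hadj := hT' (Finset.mem_coe.2 ha)
    induction a with | _ a c =>
    rw [SimpleGraph.mem_edgeSet] at hadj
    rw [treeW_mk hβ]
    cases a with
    | none => cases c with
      | none => exact absurd rfl hadj.ne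
      | some j => simpa [bres, extV] using hroot j
    | some i => cases c with
      | none => simpa [bres, extV] using hroot i
      | some j =>
        simp only [bres, extV, Option.elim, Sym2.mem_iff, reduceCtorEq, or_self, if_false]
        have h1 : Real.exp (t i + t j) ≤ Real.exp (2 * M) * Real.exp (2 * t x) := by
          rw [← Real.exp_add, Real.exp_le_exp]
          have := abs_le.1 (hMv i)
          have := abs_le.1 (hMv j)
          linarith
        calc _ ≤ b * (Real.exp (2 * M) * Real.exp (2 * t x)) :=
              mul_le_mul (hβb i j) h1 (Real.exp_pos _).le hb0
          _ = _ := by ring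
  refine (Finset.prod_le_prod hnn hle).trans (le_of_eq ?_)
  have hc : (T.filter (fun e => ¬ (none : Option V) ∈ e)).card + (roots T).card
      = Fintype.card V := by
    rw [← roots_card hT, ← tree_card hT, add_comm]
    exact Finset.card_filter_add_card_filter_not _
  rw [Finset.prod_mul_distrib, Finset.prod_const, tree_card hT, Finset.prod_ite,
    Finset.prod_const, Finset.prod_const, roots_card hT]
  have hc' : (Fintype.card V : ℝ) =
      (T.filter (fun e => ¬ (none : Option V) ∈ e)).card + (roots T).card := by
    rw [← hc]; push_cast; ring
  have hexp : Real.exp ((2 * (Fintype.card V : ℝ) - (roots T).card) * t x +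
      2 * Fintype.card V * M) = Real.exp (2 * M) ^ Fintype.card V *
      (Real.exp (t x) ^ (roots T).card *
        Real.exp (2 * t x) ^ (T.filter (fun e => ¬ (none : Option V) ∈ e)).card) := by
    rw [← Real.exp_nat_mul, ← Real.exp_nat_mul, ← Real.exp_nat_mul, ← Real.exp_add,
      ← Real.exp_add]
    congr 1
    rw [hc']
    ring
  rw [hexp]
  ring_nf

/-! ### The contribution of one tree -/

/-- Bound on the integrand in terms of `t_x`, the differences `t_v - t_x`, `s_v - s_x`, and `s_x`.
Of the observable only `O ≤ e^{t_y}/π_x` is used. -/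
lemma pointwise_bound {V : Type*} [Fintype V] [DecidableEq V]
    (G : SimpleGraph V) (hG : G.Connected) (β : V → V → ℝ) (hβ : ∀ i j, β i j = β j i)
    (hβpos : ∀ i j, G.Adj i j → 0 < β i j) (x y : V)
    (pv : V → ℝ) (hpv : ∀ i, 0 ≤ pv i) (hpx : 0 < pv x)
    {T : Finset (Sym2 (Option V))} (hT : T ∈ STrees (aug G)) :
    ∃ c C : ℝ, 0 < c ∧ 0 ≤ C ∧ ∀ e : ℝ, 0 < e → ∀ t s : V → ℝ,
      |dens G β (pinOf pv e) t s T * obs pv x y t T| ≤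
        C * e ^ (roots T).card *
          Real.exp ((Fintype.card V - (roots T).card + 1) * t x +
            (2 * Fintype.card V + 2) * ∑ v, |t v - t x| - c * ∑ v, (t v - t x) ^ 2 -
              pv x * e * (Real.cosh (t x) - 1)) *
          Real.exp (-(c * Real.exp (2 * t x - 2 * ∑ v, |t v - t x|) * ∑ v, (s v - s x) ^ 2 +
            pv x * e * Real.exp (t x) / 2 * (s x) ^ 2)) := by
  obtain ⟨c, hc, hgib⟩ := gibbs_prod_le G hG β hβ hβpos x
  obtain ⟨C, hC, htree⟩ := treeW_prod_le G β hβ hβpos pv hpv x hT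
  refine ⟨c, (1 / (2 * Real.pi)) ^ Fintype.card V * C / pv x, hc, by positivity,
    fun e he t s => ?_⟩
  have hε : ∀ i, 0 ≤ pinOf pv e i := fun i => mul_nonneg (hpv i) he.le
  have hg := hgib (pinOf pv e) hε t s
  obtain ⟨ht0, ht⟩ := htree e he t
  set M := ∑ v, |t v - t x| with hM
  have hMv : ∀ v, |t v - t x| ≤ M := fun v =>
    Finset.single_le_sum (f := fun v => |t v - t x|) (fun _ _ => abs_nonneg _) (Finset.mem_univ v)
  have hg0 : 0 ≤ ∏ e' ∈ Finset.univ.filter (fun e' : Sym2 (Option V) => e' ∈ (aug G).edgeSet),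
      gibbs β (pinOf pv e) t s e' := Finset.prod_nonneg fun a _ => by
    induction a with | _ a b => rw [gibbs_mk hβ]; exact (Real.exp_pos _).le
  have hpre0 : 0 ≤ ∏ j, Real.exp (-t j) / (2 * Real.pi) :=
    Finset.prod_nonneg fun j _ => by positivity
  have hpre : ∏ j, Real.exp (-t j) / (2 * Real.pi) ≤
      (1 / (2 * Real.pi)) ^ Fintype.card V * Real.exp (-(Fintype.card V * t x) + M) := by
    simp_rw [div_eq_mul_one_div (Real.exp _)]
    rw [Finset.prod_mul_distrib, Finset.prod_const, Finset.card_univ, mul_comm, ← Real.exp_sum]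
    refine mul_le_mul_of_nonneg_left ?_ (by positivity)
    rw [Real.exp_le_exp]
    have h1 : ∑ v, -t v ≤ ∑ v, (-t x + |t v - t x|) := Finset.sum_le_sum fun v _ => by
      linarith [neg_abs_le (t v - t x)]
    rw [Finset.sum_add_distrib, Finset.sum_const, Finset.card_univ, nsmul_eq_mul] at h1
    linarith
  have ho0 : 0 ≤ obs pv x y t T := by
    unfold obs
    have := hpv x
    have := hpv y
    split_ifs <;> positivity
  have ho : obs pv x y t T ≤ 1 / pv x * Real.exp (t x + M) := by
    have h1 : obs pv x y t T ≤
        Real.exp (t x + t y) / (pv x * Real.exp (t x) + pv y * Real.exp (t y)) := by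
      unfold obs
      have := hpv y
      exact mul_le_of_le_one_right (by positivity) (by split_ifs <;> norm_num)
    have h2 : Real.exp (t x + t y) / (pv x * Real.exp (t x) + pv y * Real.exp (t y)) ≤
        Real.exp (t x + t y) / (pv x * Real.exp (t x)) := by
      have : 0 ≤ pv y * Real.exp (t y) := mul_nonneg (hpv y) (Real.exp_pos _).le
      exact div_le_div_of_nonneg_left (Real.exp_pos _).le (by positivity) (by linarith)
    have h3 : Real.exp (t x + t y) / (pv x * Real.exp (t x)) = 1 / pv x * Real.exp (t y) := by
      rw [Real.exp_add]; field_simp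
    have h4 : Real.exp (t y) ≤ Real.exp (t x + M) := by
      rw [Real.exp_le_exp]; linarith [abs_le.1 (hMv y)]
    rw [h3] at h2
    exact (h1.trans h2).trans (mul_le_mul_of_nonneg_left h4 (by positivity))
  unfold dens
  rw [abs_of_nonneg (by positivity)]
  refine (mul_le_mul (mul_le_mul (mul_le_mul hpre hg hg0 (by positivity)) ht ht0 (by positivity))
    ho ho0 (by positivity)).trans (le_of_eq ?_)
  have hexp : Real.exp ((Fintype.card V - (roots T).card + 1) * t x +
      (2 * Fintype.card V + 2) * M - c * ∑ v, (t v - t x) ^ 2 -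
        pv x * e * (Real.cosh (t x) - 1)) =
      Real.exp (-(Fintype.card V * t x) + M) *
      Real.exp (-(pinOf pv e x * (Real.cosh (t x) - 1)) - c * ∑ v, (t v - t x) ^ 2) *
      Real.exp ((2 * (Fintype.card V : ℝ) - (roots T).card) * t x + 2 * Fintype.card V * M) *
      Real.exp (t x + M) := by
    rw [← Real.exp_add, ← Real.exp_add, ← Real.exp_add]
    congr 1
    simp only [pinOf]
    ring
  rw [hexp]
  simp only [pinOf]
  ring

/-- The contribution of a single spanning tree with at least two roots is `O(√e)`. A non-integrable
integrand would have Bochner integral zero, so an upper bound on the Lebesgue integral of the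
absolute value suffices. -/
lemma lintegral_bound {V : Type*} [Fintype V] [DecidableEq V]
    (G : SimpleGraph V) (hG : G.Connected) (β : V → V → ℝ) (hβ : ∀ i j, β i j = β j i)
    (hβpos : ∀ i j, G.Adj i j → 0 < β i j) (x y : V)
    (pv : V → ℝ) (hpv : ∀ i, 0 ≤ pv i) (hpx : 0 < pv x)
    {T : Finset (Sym2 (Option V))} (hT : T ∈ STrees (aug G)) (hk : 2 ≤ (roots T).card) :
    ∃ C : ℝ, 0 ≤ C ∧ ∀ e : ℝ, 0 < e → e ≤ 1 →
      |∫ p : (V → ℝ) × (V → ℝ), dens G β (pinOf pv e) p.1 p.2 T * obs pv x y p.1 T|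
        ≤ C * √e := by
  obtain ⟨c, C₁, hc, hC₁, hpt⟩ := pointwise_bound G hG β hβ hβpos x y pv hpv hpx hT
  obtain ⟨C₂, hC₂, hgauss⟩ := gauss_lintegral x
  obtain ⟨C₃, hC₃, hsc⟩ := scalar_bound hpx hk
  set n := Fintype.card V with hn
  set k := (roots T).card with hkdef
  have hn1 : 1 ≤ n := Fintype.card_pos_iff.2 ⟨x⟩
  have hcast : ((n - 1 : ℕ) : ℝ) = n - 1 := by push_cast [hn1]; ring
  have hfin := t_lintegral x (3 * (n : ℝ) + 1) hc
  set I := ∫⁻ t : V → ℝ, ENNReal.ofReal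
        (Real.exp (-|t x| / 2 + (3 * (n : ℝ) + 1) * ∑ v, |t v - t x| -
          c * ∑ v, (t v - t x) ^ 2)) with hI
  set C₄ : ℝ := C₁ * C₂ * ((√c)⁻¹ ^ (n - 1) * (√(pv x / 2))⁻¹) * C₃ with hC₄
  have hC₄0 : 0 ≤ C₄ := by positivity
  refine ⟨C₄ * I.toReal, by positivity, fun e he he1 => ?_⟩
  set F : (V → ℝ) → ℝ := fun t => C₁ * e ^ k *
    Real.exp ((n - k + 1) * t x + (2 * n + 2) * ∑ v, |t v - t x| - c * ∑ v, (t v - t x) ^ 2 -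
              pv x * e * (Real.cosh (t x) - 1)) with hF
  have hF0 : ∀ t, 0 ≤ F t := fun t => by positivity
  -- integrating out `s` and then bounding the remaining function of `t`
  have hinner : ∀ t : V → ℝ,
      ∫⁻ s : V → ℝ, ENNReal.ofReal |dens G β (pinOf pv e) t s T * obs pv x y t T| ≤
        ENNReal.ofReal (C₄ * √e) * ENNReal.ofReal
          (Real.exp (-|t x| / 2 + (3 * (n : ℝ) + 1) * ∑ v, |t v - t x| -
            c * ∑ v, (t v - t x) ^ 2)) := by
    intro t
    set M := ∑ v, |t v - t x| with hM
    set A := c * Real.exp (2 * t x - 2 * M) with hA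
    set B := pv x * e * Real.exp (t x) / 2 with hB
    have hA0 : 0 < A := by positivity
    have hB0 : 0 < B := by positivity
    have hsA : (√A)⁻¹ = (√c)⁻¹ * Real.exp (M - t x) := by
      rw [hA, Real.sqrt_mul hc.le, mul_inv, ← Real.exp_half, ← Real.exp_neg]
      congr 2; ring
    have hsB : (√B)⁻¹ = (√(pv x / 2))⁻¹ * (√e)⁻¹ * Real.exp (-t x / 2) := by
      have : B = pv x / 2 * e * Real.exp (t x) := by rw [hB]; ring
      rw [this, Real.sqrt_mul (by positivity), Real.sqrt_mul (by positivity), mul_inv, mul_inv,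
        ← Real.exp_half, ← Real.exp_neg]
      congr 2; ring
    calc ∫⁻ s : V → ℝ, ENNReal.ofReal |dens G β (pinOf pv e) t s T * obs pv x y t T|
        ≤ ∫⁻ s : V → ℝ, ENNReal.ofReal (F t) * ENNReal.ofReal
            (Real.exp (-(A * ∑ v, (s v - s x) ^ 2 + B * (s x) ^ 2))) := by
          refine lintegral_mono fun s => ?_
          rw [← ENNReal.ofReal_mul (hF0 t)]
          exact ENNReal.ofReal_le_ofReal (hpt e he t s)
      _ = ENNReal.ofReal (F t * (C₂ * ((√A)⁻¹ ^ (n - 1) * (√B)⁻¹))) := by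
          rw [lintegral_const_mul' _ _ ENNReal.ofReal_ne_top, hgauss A B hA0 hB0,
            ENNReal.ofReal_mul (hF0 t)]
      _ ≤ ENNReal.ofReal ((C₄ * √e) * Real.exp (-|t x| / 2 + (3 * (n : ℝ) + 1) * M -
            c * ∑ v, (t v - t x) ^ 2)) := by
          refine ENNReal.ofReal_le_ofReal ?_
          have h := hsc e (t x) he he1
          set W := Real.exp ((3 * (n : ℝ) + 1) * M - c * ∑ v, (t v - t x) ^ 2) with hW
          have e1 : Real.exp ((n - k + 1) * t x + (2 * n + 2) * M - c * ∑ v, (t v - t x) ^ 2 -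
              pv x * e * (Real.cosh (t x) - 1)) *
              (Real.exp (M - t x) ^ (n - 1) * Real.exp (-t x / 2)) =
              Real.exp ((3 / 2 - k) * t x - pv x * e * (Real.cosh (t x) - 1)) * W := by
            rw [hW, ← Real.exp_nat_mul, ← Real.exp_add, ← Real.exp_add, ← Real.exp_add, hcast]
            congr 1; ring
          have e2 : Real.exp (-|t x| / 2 + (3 * (n : ℝ) + 1) * M - c * ∑ v, (t v - t x) ^ 2)
              = Real.exp (-|t x| / 2) * W := by
            rw [hW, ← Real.exp_add]; congr 1; ring
          rw [e2, hsA, hsB, mul_pow]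
          set P := C₁ * C₂ * ((√c)⁻¹ ^ (n - 1) * (√(pv x / 2))⁻¹) with hP
          have hP0 : 0 ≤ P * W := by positivity
          calc _ = P * (e ^ k * (√e)⁻¹) * (Real.exp ((n - k + 1) * t x + (2 * n + 2) * M -
                c * ∑ v, (t v - t x) ^ 2 - pv x * e * (Real.cosh (t x) - 1)) *
                (Real.exp (M - t x) ^ (n - 1) * Real.exp (-t x / 2))) := by
                  rw [hF, hP]; ring
            _ = (P * W) * (e ^ k * (√e)⁻¹ *
                Real.exp ((3 / 2 - k) * t x - pv x * e * (Real.cosh (t x) - 1))) := by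
                  rw [e1]; ring
            _ ≤ (P * W) * (C₃ * (√e * Real.exp (-|t x| / 2))) :=
                  mul_le_mul_of_nonneg_left h hP0
            _ = _ := by rw [hC₄]; ring
      _ = _ := ENNReal.ofReal_mul (by positivity)
  have hmain : ∫⁻ p : (V → ℝ) × (V → ℝ),
      ENNReal.ofReal |dens G β (pinOf pv e) p.1 p.2 T * obs pv x y p.1 T|
        ≤ ENNReal.ofReal (C₄ * √e) * I := by
    rw [hI, ← lintegral_const_mul' _ _ ENNReal.ofReal_ne_top, Measure.volume_eq_prod]
    exact (lintegral_prod_le _).trans (lintegral_mono hinner)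
  have h1 := norm_integral_le_lintegral_norm (μ := (volume : Measure ((V → ℝ) × (V → ℝ))))
    (fun p => dens G β (pinOf pv e) p.1 p.2 T * obs pv x y p.1 T)
  simp only [Real.norm_eq_abs] at h1
  refine h1.trans ((ENNReal.toReal_mono (ENNReal.mul_ne_top ENNReal.ofReal_ne_top hfin)
    hmain).trans (le_of_eq ?_))
  rw [ENNReal.toReal_mul, ENNReal.toReal_ofReal (by positivity)]
  ring

/-- contribution of at least two roots: with pinning
`ε = (π_i ε)_{i∈V}`, `lim_{ε↓0} E_{μ^ε}[O^π_{xy} 1{|R(T)|>1}] = 0`. -/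
theorem stmt_11 {V : Type*} [Fintype V] [DecidableEq V]
    (G : SimpleGraph V) (hG : G.Connected)
    (β : V → V → ℝ) (hβsymm : ∀ i j, β i j = β j i)
    (hβpos : ∀ i j, G.Adj i j → 0 < β i j)
    (x y : V) (hxy : x ≠ y)
    (pv : V → ℝ) (hpv : ∀ i, 0 ≤ pv i) (hpx : 0 < pv x) (hpy : 0 < pv y) :
    Filter.Tendsto
      (fun ε : ℝ => expect G β (pinOf pv ε)
        (fun t _ T => obs pv x y t T * (if 1 < (roots T).card then 1 else 0)))
      (𝓝[>] (0 : ℝ)) (𝓝 0) := by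
  unfold expect
  suffices h : Tendsto _ (𝓝[>] (0 : ℝ)) (𝓝 (∑ _T ∈ STrees (aug G), (0 : ℝ))) by
    simpa only [Finset.sum_const_zero] using h
  refine tendsto_finsetSum _ fun T hT => ?_
  by_cases hk : 1 < (roots T).card
  · simp only [hk, if_true, mul_one]
    obtain ⟨C, hC, h⟩ := lintegral_bound G hG β hβsymm hβpos x y pv hpv hpx hT hk
    have hlim : Tendsto (fun e : ℝ => C * √e) (𝓝[>] 0) (𝓝 0) := by
      have : Tendsto (fun e : ℝ => C * √e) (𝓝 0) (𝓝 (C * √0)) :=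
        (Real.continuous_sqrt.const_mul C).tendsto 0
      simpa using this.mono_left nhdsWithin_le_nhds
    refine squeeze_zero_norm' ?_ hlim
    filter_upwards [Ioc_mem_nhdsGT (zero_lt_one' ℝ)] with e he
    exact h e he.1 he.2
  · simp [hk]

end H22
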